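/- Let d ≥ 3. There exists a Moore graph of degree d and diameter 2 if and only if there exists a simple graph H with the following properties: (i) H is d-partite, i.e., its vertex set is partitioned into d independent sets (parts); (ii) each part has d − 1 vertices; (iii) every vertex of H has degree d − 1; (iv) each vertex in one part is adjacent to exactly one vertex in any other part; (v) H has no triangles and no 4-cycles. -/

import Mathlib

open SimpleGraph

/-!
Fix a root `r` of a Moore graph `G` of degree `d`. Every vertex at distance 2 from `r` has exactly
one common neighbour with `r`; sorting these `d (d - 1)` vertices by that common neighbour gives the
`d` parts of `H`. Conversely, `H` is extended by one hub per part, joined to the vertices of that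
part, and by a root joined to all hubs.

The delicate point is that two nonadjacent vertices `w`, `z` in different parts of `H` have a common
neighbour. Send each neighbour `x` of `w` to the vertex of the part of `z` that equals or is
adjacent to `x`. As `H` has no triangles and no 4-cycles this map is injective, and both the
neighbourhood of `w` and the part of `z` have `d - 1` elements, so the map reaches `z`.
-/

section NoShortCycle

variable {V V' : Type*} {G : SimpleGraph V} {G' : SimpleGraph V'}

/-- Girth at least 5: there are no triangles and no 4-cycles, the latter being encoded as the
uniqueness of common neighbours of distinct vertices. -/
structure NoShortCycle (G : SimpleGraph V) : Prop where
  not_adj {a b c : V} : G.Adj a b → G.Adj a c → ¬ G.Adj b c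
  eq_of_common {a b x y : V} : a ≠ b → G.Adj a x → G.Adj b x → G.Adj a y → G.Adj b y → x = y

theorem noShortCycle_iff : NoShortCycle G ↔
    (¬∃ a b c, G.Adj a b ∧ G.Adj b c ∧ G.Adj c a) ∧
    (¬∃ a b c e, a ≠ c ∧ b ≠ e ∧ G.Adj a b ∧ G.Adj b c ∧ G.Adj c e ∧ G.Adj e a) := by
  constructor
  · rintro ⟨htri, hcommon⟩
    exact ⟨fun ⟨_, _, _, hab, hbc, hca⟩ => htri hab hca.symm hbc,
      fun ⟨_, _, _, _, hac, hbe, hab, hbc, hce, hea⟩ =>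
        hbe (hcommon hac hab hbc.symm hea.symm hce)⟩
  · rintro ⟨htri, hquad⟩
    refine ⟨fun {a b c} hab hac hbc => htri ⟨a, b, c, hab, hbc, hac.symm⟩,
      fun {a b x y} hab hax hbx hay hby => ?_⟩
    by_contra hxy
    exact hquad ⟨a, x, b, y, hab, hxy, hax, hbx.symm, hby, hay.symm⟩

namespace NoShortCycle

theorem of_embedding (hG' : NoShortCycle G') (f : G ↪g G') : NoShortCycle G where
  not_adj hab hac hbc :=
    hG'.not_adj (f.map_adj_iff.2 hab) (f.map_adj_iff.2 hac) (f.map_adj_iff.2 hbc)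
  eq_of_common hab hax hbx hay hby :=
    f.injective <| hG'.eq_of_common (f.injective.ne hab) (f.map_adj_iff.2 hax)
      (f.map_adj_iff.2 hbx) (f.map_adj_iff.2 hay) (f.map_adj_iff.2 hby)

theorem eq_of_adj_of_eq_or_adj (hG : NoShortCycle G) {w x y z : V} (hwz : w ≠ z)
    (hwx : G.Adj w x) (hwy : G.Adj w y) (hxz : x = z ∨ G.Adj x z) (hyz : y = z ∨ G.Adj y z) :
    x = y := by
  rcases hxz with rfl | hxz <;> rcases hyz with rfl | hyz
  · rfl
  · exact (hG.not_adj hwy hwx hyz).elim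
  · exact (hG.not_adj hwx hwy hxz).elim
  · exact hG.eq_of_common hwz hwx hxz.symm hwy hyz.symm

end NoShortCycle

end NoShortCycle

section Moore

variable {V V' : Type*} {G : SimpleGraph V} {G' : SimpleGraph V'} {d : ℕ}

/-- A Moore graph of degree `d` and diameter at most 2, described without reference to `Fintype` or
decidability data. -/
structure IsMoore (G : SimpleGraph V) (d : ℕ) : Prop extends NoShortCycle G where
  ncard_neighborSet (v : V) : (G.neighborSet v).ncard = d
  exists_common {a b : V} : a ≠ b → ¬ G.Adj a b → ∃ c, G.Adj a c ∧ G.Adj b c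

theorem isSRGWith_iff_isMoore [Fintype V] [DecidableRel G.Adj] {n : ℕ} :
    G.IsSRGWith n d 0 1 ↔ Fintype.card V = n ∧ IsMoore G d := by
  have hdegree (v : V) : (G.neighborSet v).ncard = G.degree v := by
    rw [Set.ncard_eq_toFinset_card', degree, neighborFinset]
  have hzero (a b : V) :
      Fintype.card (G.commonNeighbors a b) = 0 ↔ ∀ c, G.Adj a c → ¬ G.Adj b c := by
    rw [Fintype.card_eq_zero_iff]
    simp [isEmpty_subtype, mem_commonNeighbors]
  have hone (a b : V) :
      Fintype.card (G.commonNeighbors a b) = 1 ↔ ∃! c, G.Adj a c ∧ G.Adj b c := by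
    rw [Fintype.card_eq_one_iff]
    simp [ExistsUnique, mem_commonNeighbors]
  constructor
  · rintro ⟨hcard, hreg, hadj, hnadj⟩
    have htri {a b c : V} (hab : G.Adj a b) (hac : G.Adj a c) : ¬ G.Adj b c :=
      (hzero a b).1 (hadj a b hab) c hac
    have hunique {a b : V} (hab : a ≠ b) (hn : ¬ G.Adj a b) : ∃! c, G.Adj a c ∧ G.Adj b c :=
      (hone a b).1 (hnadj hab hn)
    exact ⟨hcard,
      { not_adj := htri
        eq_of_common hab hax hbx hay hby :=
          (hunique hab fun h => htri h hax hbx).unique ⟨hax, hbx⟩ ⟨hay, hby⟩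
        ncard_neighborSet v := (hdegree v).trans (hreg v)
        exists_common hab hn := (hunique hab hn).exists }⟩
  · rintro ⟨hcard, hG⟩
    refine ⟨hcard, fun v => (hdegree v).symm.trans (hG.ncard_neighborSet v),
      fun a b hab => (hzero a b).2 fun c hac => hG.not_adj hab hac,
      fun a b hab hn => (hone a b).2 ?_⟩
    obtain ⟨c, hac, hbc⟩ := hG.exists_common hab hn
    exact ⟨c, ⟨hac, hbc⟩, fun y hy => hG.eq_of_common hab hy.1 hy.2 hac hbc⟩

theorem IsMoore.of_iso (hG : IsMoore G d) (f : G ≃g G') : IsMoore G' d where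
  toNoShortCycle := hG.toNoShortCycle.of_embedding f.symm.toEmbedding
  ncard_neighborSet v := by
    rw [← hG.ncard_neighborSet (f.symm v)]
    exact Set.ncard_congr' (f.symm.mapNeighborSet v)
  exists_common {a b} hab hnadj := by
    obtain ⟨c, hac, hbc⟩ := hG.exists_common (f.symm.injective.ne hab)
      (mt f.symm.map_adj_iff.1 hnadj)
    exact ⟨f c, by simpa using f.map_adj_iff.2 hac, by simpa using f.map_adj_iff.2 hbc⟩

end Moore

section Partition

variable {W ι κ : Type*} {H : SimpleGraph W} {P : W → ι} {m : ℕ}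

/-- The graph `H` with parts the fibres of `P`, as in conditions (i), (ii), (iv) and (v), where `m`
is the common size of the parts. The degree in condition (iii) is computed in
`IsMoorePartition.ncard_neighborSet`. -/
structure IsMoorePartition (H : SimpleGraph W) (P : W → ι) (m : ℕ) : Prop
    extends NoShortCycle H where
  ne_of_adj (a b : W) : H.Adj a b → P a ≠ P b
  ncard_fiber (i : ι) : {w | P w = i}.ncard = m
  existsUnique_adj (w : W) (i : ι) : i ≠ P w → ∃! z, P z = i ∧ H.Adj w z

namespace IsMoorePartition

theorem comp_equiv (hH : IsMoorePartition H P m) (e : ι ≃ κ) : IsMoorePartition H (e ∘ P) m where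
  toNoShortCycle := hH.toNoShortCycle
  ne_of_adj a b hab := e.injective.ne (hH.ne_of_adj a b hab)
  ncard_fiber i := by simpa [← Equiv.eq_symm_apply] using hH.ncard_fiber (e.symm i)
  existsUnique_adj w i hi := by
    simpa [← Equiv.eq_symm_apply] using
      hH.existsUnique_adj w (e.symm i) (by simpa [Equiv.symm_apply_eq] using hi)

theorem eq_of_adj (hH : IsMoorePartition H P m) {w u v : W} (hP : P u = P v) (hwu : H.Adj w u)
    (hwv : H.Adj w v) : u = v :=
  (hH.existsUnique_adj w (P v) (hH.ne_of_adj w v hwv).symm).unique ⟨hP, hwu⟩ ⟨rfl, hwv⟩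

theorem bijOn_neighborSet (hH : IsMoorePartition H P m) (w : W) :
    Set.BijOn P (H.neighborSet w) {P w}ᶜ := by
  refine ⟨fun x hwx => (hH.ne_of_adj w x hwx).symm,
    fun x hwx y hwy hxy => hH.eq_of_adj hxy hwx hwy, fun i hi => ?_⟩
  obtain ⟨z, ⟨hzi, hwz⟩, -⟩ := hH.existsUnique_adj w i hi
  exact ⟨z, hwz, hzi⟩

theorem ncard_neighborSet [Finite ι] (hH : IsMoorePartition H P m) (w : W) :
    (H.neighborSet w).ncard = Nat.card ι - 1 := by
  rw [(hH.bijOn_neighborSet w).ncard_eq, Set.ncard_compl, Set.ncard_singleton]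

theorem exists_eq_or_adj (hH : IsMoorePartition H P m) (x : W) (i : ι) :
    ∃ z, P z = i ∧ (x = z ∨ H.Adj x z) := by
  by_cases hi : i = P x
  · exact ⟨x, hi.symm, .inl rfl⟩
  · obtain ⟨z, ⟨hzi, hxz⟩, -⟩ := hH.existsUnique_adj x i hi
    exact ⟨z, hzi, .inr hxz⟩

theorem exists_common (hH : IsMoorePartition H P m) (hm : m ≠ 0) (hι : Nat.card ι = m + 1)
    {w z : W} (hP : P w ≠ P z) (hnadj : ¬ H.Adj w z) : ∃ x, H.Adj w x ∧ H.Adj z x := by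
  have : Finite ι := Nat.finite_of_card_ne_zero (by simp [hι])
  choose f hfP hf using fun x => hH.exists_eq_or_adj x (P z)
  have hinj : Set.InjOn f (H.neighborSet w) := fun x hwx y hwy hxy =>
    hH.eq_of_adj_of_eq_or_adj (fun h => hP (by rw [h, hfP])) hwx hwy (hf x) (hxy ▸ hf y)
  have himage : f '' H.neighborSet w = {y | P y = P z} :=
    Set.eq_of_subset_of_ncard_le (Set.image_subset_iff.2 fun x _ => hfP x)
      (by rw [hinj.ncard_image, hH.ncard_fiber, hH.ncard_neighborSet, hι, Nat.add_sub_cancel])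
      (Set.finite_of_ncard_ne_zero (by rwa [hH.ncard_fiber]))
  obtain ⟨x, hwx, hxz⟩ : z ∈ f '' H.neighborSet w := himage ▸ rfl
  rcases hf x with h | h
  · exact (hnadj (by rwa [← hxz, ← h])).elim
  · exact ⟨x, hwx, hxz ▸ h.symm⟩

theorem finite [Finite ι] (hH : IsMoorePartition H P m) (hm : m ≠ 0) : Finite W :=
  Set.finite_univ_iff.1 <| Set.finite_univ.preimage' fun i _ =>
    Set.finite_of_ncard_ne_zero (by rwa [← hH.ncard_fiber i] at hm)

theorem natCard_eq [Finite ι] [Finite W] (hH : IsMoorePartition H P m) :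
    Nat.card W = Nat.card ι * m := by
  have := Fintype.ofFinite ι
  have hfiber (i : ι) : Nat.card {w // P w = i} = m := hH.ncard_fiber i
  simp [← Nat.card_congr (Equiv.sigmaFiberEquiv P), Nat.card_sigma, hfiber]

end IsMoorePartition

end Partition

section Extension

variable {W ι : Type*} {H : SimpleGraph W} {P : W → ι} {m : ℕ}

/-- The vertices of the extension of a graph on `W` with parts indexed by `ι`: one root, one hub for
each part, and the original vertices. -/
inductive ExtensionVertex (ι W : Type*)
  | root
  | hub (i : ι)
  | base (w : W)

namespace ExtensionVertex

/-- Reduces counting the vertices of the extension to counting `Option` and `⊕`. -/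
def equivOption : ExtensionVertex ι W ≃ Option (ι ⊕ W) where
  toFun
    | root => none
    | hub i => some (.inl i)
    | base w => some (.inr w)
  invFun
    | none => root
    | some (.inl i) => hub i
    | some (.inr w) => base w
  left_inv := by rintro (_ | _ | _) <;> rfl
  right_inv := by rintro (_ | _ | _) <;> rfl

instance [Finite ι] [Finite W] : Finite (ExtensionVertex ι W) := .of_equiv _ equivOption.symm

theorem natCard_eq [Finite ι] [Finite W] :
    Nat.card (ExtensionVertex ι W) = Nat.card ι + Nat.card W + 1 := by
  rw [Nat.card_congr equivOption, Finite.card_option, Nat.card_sum]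

theorem hub_injective : Function.Injective (hub : ι → ExtensionVertex ι W) := fun _ _ => hub.inj

theorem base_injective : Function.Injective (base : W → ExtensionVertex ι W) := fun _ _ => base.inj

end ExtensionVertex

open ExtensionVertex

/-- The extension of `H`: the hub of each part is joined to the vertices of that part, and the root
is joined to all hubs. -/
def extension (H : SimpleGraph W) (P : W → ι) : SimpleGraph (ExtensionVertex ι W) where
  Adj
    | root, hub _ | hub _, root => True
    | hub i, base w | base w, hub i => P w = i
    | base w, base z => H.Adj w z
    | _, _ => False
  symm := ⟨by rintro (_ | _ | _) (_ | _ | _) <;> simp [H.adj_comm]⟩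
  loopless := ⟨by rintro (_ | _ | _) <;> simp⟩

theorem neighborSet_extension_root : (extension H P).neighborSet root = Set.range hub := by
  ext (_ | _ | _) <;> simp [extension]

theorem neighborSet_extension_hub (i : ι) :
    (extension H P).neighborSet (hub i) = insert root (base '' {w | P w = i}) := by
  ext (_ | _ | _) <;> simp [extension]

theorem neighborSet_extension_base (w : W) :
    (extension H P).neighborSet (base w) = insert (hub (P w)) (base '' H.neighborSet w) := by
  ext (_ | _ | _) <;> simp [extension, eq_comm]

namespace IsMoorePartition

theorem noShortCycle_extension (hH : IsMoorePartition H P m) :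
    NoShortCycle (extension H P) where
  not_adj {a b c} hab hac hbc := by
    have hne := hH.ne_of_adj
    have htri {u v w : W} : H.Adj u v → H.Adj u w → ¬ H.Adj v w := hH.not_adj
    rcases a with _ | i | u <;> rcases b with _ | j | v <;> rcases c with _ | k | w <;>
      simp only [extension] at hab hac hbc <;> grind
  eq_of_common {a b x y} hab hax hbx hay hby := by
    -- A 4-cycle not inside `H` has a vertex in two parts, or one with two neighbours in a part.
    have hpart {u w z : W} : P w = P z → H.Adj u w → H.Adj u z → w = z := hH.eq_of_adj
    have hpart' {u v w : W} (hP : P u = P v) (huw : H.Adj u w) (hvw : H.Adj v w) : u = v :=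
      hH.eq_of_adj hP huw.symm hvw.symm
    have hcommon {u v w z : W} :
        u ≠ v → H.Adj u w → H.Adj v w → H.Adj u z → H.Adj v z → w = z := hH.eq_of_common
    rcases a with _ | i | u <;> rcases b with _ | j | v <;> rcases x with _ | k | w <;>
      rcases y with _ | l | z <;>
      simp only [extension] at hax hbx hay hby <;> grind [base.injEq]

theorem ncard_neighborSet_extension [Finite W] (hH : IsMoorePartition H P m)
    (hι : Nat.card ι = m + 1) (v : ExtensionVertex ι W) :
    ((extension H P).neighborSet v).ncard = m + 1 := by
  have : Finite ι := Nat.finite_of_card_ne_zero (by simp [hι])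
  rcases v with _ | i | w
  · rw [neighborSet_extension_root, Set.ncard_range_of_injective hub_injective, hι]
  · rw [neighborSet_extension_hub, Set.ncard_insert_of_notMem (by simp),
      Set.ncard_image_of_injective _ base_injective, hH.ncard_fiber]
  · rw [neighborSet_extension_base, Set.ncard_insert_of_notMem (by simp),
      Set.ncard_image_of_injective _ base_injective, hH.ncard_neighborSet, hι, Nat.add_sub_cancel]

theorem exists_common_extension (hH : IsMoorePartition H P m) (hm : m ≠ 0)
    (hι : Nat.card ι = m + 1) {a b : ExtensionVertex ι W} (hab : a ≠ b)
    (hnadj : ¬ (extension H P).Adj a b) :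
    ∃ c, (extension H P).Adj a c ∧ (extension H P).Adj b c := by
  have hub_base (i w) (hi : ¬ P w = i) :
      ∃ c, (extension H P).Adj (hub i) c ∧ (extension H P).Adj (base w) c := by
    obtain ⟨z, hz, -⟩ := hH.existsUnique_adj w i (Ne.symm hi)
    exact ⟨base z, hz⟩
  rcases a with _ | i | w <;> rcases b with _ | j | z
  · exact (hab rfl).elim
  · exact (hnadj trivial).elim
  · exact ⟨hub (P z), trivial, rfl⟩
  · exact (hnadj trivial).elim
  · exact ⟨root, trivial, trivial⟩
  · exact hub_base i z hnadj
  · exact ⟨hub (P w), rfl, trivial⟩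
  · simpa only [and_comm] using hub_base j w hnadj
  · by_cases hP : P w = P z
    · exact ⟨hub (P w), rfl, hP.symm⟩
    · obtain ⟨x, hx⟩ := hH.exists_common hm hι hP hnadj
      exact ⟨base x, hx⟩

theorem isMoore_extension (hH : IsMoorePartition H P m) (hm : m ≠ 0)
    (hι : Nat.card ι = m + 1) : IsMoore (extension H P) (m + 1) where
  toNoShortCycle := hH.noShortCycle_extension
  ncard_neighborSet :=
    have : Finite ι := Nat.finite_of_card_ne_zero (by simp [hι])
    have : Finite W := hH.finite hm
    hH.ncard_neighborSet_extension hι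
  exists_common := hH.exists_common_extension hm hι

end IsMoorePartition

end Extension

section Root

variable {V : Type*} {G : SimpleGraph V} {r u v : V} {d : ℕ}

/-- The vertices that are neither equal nor adjacent to `r`; in a Moore graph these are the vertices
at distance 2 from `r`. -/
def farSet (G : SimpleGraph V) (r : V) : Set V := {v | v ≠ r ∧ ¬ G.Adj r v}

namespace NoShortCycle

theorem mem_farSet_of_adj (hG : NoShortCycle G) (hru : G.Adj r u) (huv : G.Adj u v)
    (hvr : v ≠ r) : v ∈ farSet G r :=
  ⟨hvr, fun hrv => hG.not_adj hru hrv huv⟩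

end NoShortCycle

namespace IsMoore

/-- The common neighbour of `r` and a vertex far from `r`. -/
noncomputable def link (hG : IsMoore G d) (r : V) (w : farSet G r) : G.neighborSet r :=
  ⟨_, (hG.exists_common w.2.1.symm w.2.2).choose_spec.1⟩

theorem link_eq_iff (hG : IsMoore G d) {w : farSet G r} {i : G.neighborSet r} :
    hG.link r w = i ↔ G.Adj i w := by
  have hlink : G.Adj (hG.link r w) w :=
    (hG.exists_common w.2.1.symm w.2.2).choose_spec.2.symm
  refine ⟨fun h => h ▸ hlink, fun h => Subtype.ext ?_⟩
  exact hG.eq_of_common w.2.1.symm (hG.link r w).2 hlink.symm i.2 h.symm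

theorem ncard_link_fiber (hG : IsMoore G d) (i : G.neighborSet r) :
    {w | hG.link r w = i}.ncard = d - 1 := by
  have himage : Subtype.val '' {w | hG.link r w = i} = G.neighborSet i \ {r} := by
    ext v
    simp only [hG.link_eq_iff, Set.mem_image, Set.mem_ofPred_eq, Subtype.exists, exists_and_left,
      exists_prop, exists_eq_right_right, Set.mem_sdiff, mem_neighborSet, Set.mem_singleton_iff]
    exact and_congr_right fun hv => ⟨And.left, hG.mem_farSet_of_adj i.2 hv⟩
  rw [← Set.ncard_image_of_injective _ Subtype.val_injective, himage,
    Set.ncard_sdiff_singleton_of_mem ((G.mem_neighborSet _ _).2 i.2.symm), hG.ncard_neighborSet]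

theorem existsUnique_adj_of_ne_link (hG : IsMoore G d) (w : farSet G r) (i : G.neighborSet r)
    (hi : i ≠ hG.link r w) : ∃! z, hG.link r z = i ∧ (G.induce (farSet G r)).Adj w z := by
  have hiw : ¬ G.Adj i w := fun h => hi (hG.link_eq_iff.2 h).symm
  have hne : (i : V) ≠ w := fun h => w.2.2 (h ▸ i.2)
  obtain ⟨z, hiz, hwz⟩ := hG.exists_common hne hiw
  have hzr : z ≠ r := fun h => w.2.2 (h ▸ hwz).symm
  refine ⟨⟨z, hG.mem_farSet_of_adj i.2 hiz hzr⟩, ⟨hG.link_eq_iff.2 hiz, hwz⟩, fun y ⟨hy, hwy⟩ => ?_⟩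
  exact Subtype.ext (hG.eq_of_common hne (hG.link_eq_iff.1 hy) hwy hiz hwz)

theorem isMoorePartition_link (hG : IsMoore G d) (r : V) :
    IsMoorePartition (G.induce (farSet G r)) (hG.link r) (d - 1) where
  toNoShortCycle := hG.toNoShortCycle.of_embedding (Embedding.induce _)
  ne_of_adj _ _ hab h := hG.not_adj (hG.link_eq_iff.1 h) (hG.link_eq_iff.1 rfl) hab
  ncard_fiber := hG.ncard_link_fiber
  existsUnique_adj := hG.existsUnique_adj_of_ne_link

end IsMoore

end Root

/-- Theorem 4. For `d ≥ 3`, a Moore graph of degree `d` and diameter 2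
(i.e. a strongly regular graph with parameters `(d² + 1, d, 0, 1)`) exists if and only if there
is a simple graph `H` together with a partition of its vertices into `d` parts (the fibers of
`P : W → Fin d`) such that: (i) each part is an independent set; (ii) each part has `d - 1`
vertices; (iii) every vertex has degree `d - 1`; (iv) every vertex is adjacent to exactly one
vertex of each other part; (v) `H` has no triangles and no 4-cycles. -/
theorem moore_exists_iff_H_exists (d : ℕ) (hd : 3 ≤ d) :
    (∃ G : SimpleGraph (Fin (d ^ 2 + 1)), ∃ _ : DecidableRel G.Adj,
        G.IsSRGWith (d ^ 2 + 1) d 0 1) ↔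
    ∃ (W : Type) (H : SimpleGraph W) (P : W → Fin d),
      (∀ a b : W, H.Adj a b → P a ≠ P b) ∧
      (∀ i : Fin d, {w : W | P w = i}.ncard = d - 1) ∧
      (∀ w : W, (H.neighborSet w).ncard = d - 1) ∧
      (∀ w : W, ∀ i : Fin d, i ≠ P w → ∃! z : W, P z = i ∧ H.Adj w z) ∧
      (¬∃ a b c : W, H.Adj a b ∧ H.Adj b c ∧ H.Adj c a) ∧
      (¬∃ a b c e : W, a ≠ c ∧ b ≠ e ∧ H.Adj a b ∧ H.Adj b c ∧ H.Adj c e ∧ H.Adj e a) := by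
  constructor
  · rintro ⟨G, _, hG⟩
    have hM : IsMoore G d := (isSRGWith_iff_isMoore.1 hG).2
    let e : G.neighborSet 0 ≃ Fin d := Finite.equivFinOfCardEq (hM.ncard_neighborSet 0)
    have hH := (hM.isMoorePartition_link 0).comp_equiv e
    exact ⟨_, _, _, hH.ne_of_adj, hH.ncard_fiber, by simpa using hH.ncard_neighborSet,
      hH.existsUnique_adj, noShortCycle_iff.1 hH.toNoShortCycle⟩
  · rintro ⟨W, H, P, hne, hcard, -, hunique, hcycle⟩
    obtain ⟨m, rfl⟩ : ∃ m, d = m + 1 := ⟨d - 1, by omega⟩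
    have hm : m ≠ 0 := by omega
    have hH : IsMoorePartition H P m := ⟨noShortCycle_iff.2 hcycle, hne, hcard, hunique⟩
    have : Finite W := hH.finite hm
    have := Fintype.ofFinite (ExtensionVertex (Fin (m + 1)) W)
    have hV : Fintype.card (ExtensionVertex (Fin (m + 1)) W) = (m + 1) ^ 2 + 1 := by
      rw [Fintype.card_eq_nat_card, ExtensionVertex.natCard_eq, hH.natCard_eq, Nat.card_fin]
      ring
    have hM : IsMoore (extension H P) (m + 1) := hH.isMoore_extension hm (Nat.card_fin _)
    classical
    exact ⟨(extension H P).overFin hV, inferInstance,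
      isSRGWith_iff_isMoore.2 ⟨Fintype.card_fin _, hM.of_iso (overFinIso _ hV)⟩⟩
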